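/- Let n ≥ 1 be an integer. If α = β > −1/2, then for 0 ≤ k ≤ n one has d_{k,n} > 0 when n − k is even and d_{k,n} = 0 when n − k is odd. If α = β = −1/2, then d_{n,n} > 0 and d_{k,n} = 0 for all 1 ≤ k ≤ n − 1. -/

import Mathlib

open Finset

/-- Pochhammer symbol `(a)_j = a (a+1) ⋯ (a+j-1)`. -/
noncomputable def poch (a : ℝ) (j : ℕ) : ℝ := ∏ i ∈ Finset.range j, (a + i)

/-- Generalized binomial coefficient `binom(a, m) = a (a-1) ⋯ (a-m+1) / m!`. -/
noncomputable def gbinom (a : ℝ) (m : ℕ) : ℝ :=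
  (∏ i ∈ Finset.range m, (a - i)) / (Nat.factorial m)

/-- Jacobi polynomial `P_n^{(α,β)}(x)` of a real variable. -/
noncomputable def jacobiP (α β : ℝ) (n : ℕ) (x : ℝ) : ℝ :=
  (1 / 2 ^ n) * ∑ k ∈ Finset.range (n + 1),
    gbinom ((n : ℝ) + α) (n - k) * gbinom ((n : ℝ) + β) k * (x - 1) ^ k * (x + 1) ^ (n - k)

/-- Jacobi polynomial `P_n^{(α,β)}(z)` of a complex variable. -/
noncomputable def jacobiC (α β : ℝ) (n : ℕ) (z : ℂ) : ℂ :=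
  (1 / 2 ^ n) * ∑ k ∈ Finset.range (n + 1),
    ((gbinom ((n : ℝ) + α) (n - k) * gbinom ((n : ℝ) + β) k : ℝ) : ℂ) *
      (z - 1) ^ k * (z + 1) ^ (n - k)

/-- Chebyshev-connection coefficients `d_{k,n}`, given by a terminating ₃F₂ sum. -/
noncomputable def dCoeff (α β : ℝ) (n k : ℕ) : ℝ :=
  (poch ((n : ℝ) + α + β + 1) k * poch ((k : ℝ) + α + 1) (n - k)) /
      ((Nat.factorial (n - k)) * 2 ^ (2 * k) * (Nat.factorial k)) *
    ∑ j ∈ Finset.range (n - k + 1),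
      (poch ((k : ℝ) - n) j * poch ((n : ℝ) + k + α + β + 1) j * poch ((k : ℝ) + 1 / 2) j) /
        (poch ((k : ℝ) + α + 1) j * poch (2 * (k : ℝ) + 1) j * (Nat.factorial j))

/-- The Bernstein ellipse `E_ρ`: the set of points `z = (u + u⁻¹)/2` with `|u| = ρ`. -/
def bernsteinEllipse (ρ : ℝ) : Set ℂ :=
  {z : ℂ | ∃ u : ℂ, ‖u‖ = ρ ∧ z = (u + u⁻¹) / 2}

theorem poch_succ (a : ℝ) (j : ℕ) : poch a (j + 1) = poch a j * (a + j) := by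
  unfold poch
  rw [Finset.prod_range_succ]

theorem poch_zero (a : ℝ) : poch a 0 = 1 := by
  simp [poch]

theorem poch_pos (a : ℝ) (ha : 0 < a) (j : ℕ) : 0 < poch a j := by
  unfold poch
  exact Finset.prod_pos fun i _ => by positivity

theorem poch_shift (a : ℝ) (j : ℕ) : a * poch (a + 1) j = poch a j * (a + j) := by
  induction j with
  | zero => simp [poch]
  | succ j ih =>
    rw [poch_succ, poch_succ, ← mul_assoc, ih]
    push_cast
    ring

theorem poch_shift2 (a : ℝ) (j : ℕ) :
    a * (a + 1) * poch (a + 2) j = poch a j * (a + j) * (a + 1 + j) := by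
  have h1 := poch_shift a j
  have h2 := poch_shift (a + 1) j
  have e : a + 1 + 1 = a + 2 := by ring
  rw [e] at h2
  calc a * (a + 1) * poch (a + 2) j = a * ((a + 1) * poch (a + 2) j) := by ring
    _ = (a * poch (a + 1) j) * (a + 1 + j) := by rw [h2]; ring
    _ = _ := by rw [h1]

theorem poch_neg_zero (m j : ℕ) (h : m < j) : poch (-(m : ℝ)) j = 0 := by
  unfold poch
  exact Finset.prod_eq_zero (Finset.mem_range.mpr h) (by ring)

/-- Summand of the terminating Watson sum. -/
noncomputable def wTerm (a c : ℝ) (m j : ℕ) : ℝ :=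
  (poch (-(m : ℝ)) j * poch ((m : ℝ) + 2 * a - 1) j * poch c j) /
    (poch a j * poch (2 * c) j * (Nat.factorial j))

/-- The terminating Watson sum. -/
noncomputable def wSum (a c : ℝ) (m : ℕ) : ℝ := ∑ j ∈ Finset.range (m + 1), wTerm a c m j

theorem wTerm_zero (a c : ℝ) (m j : ℕ) (h : m < j) : wTerm a c m j = 0 := by
  simp [wTerm, poch_neg_zero m j h]

/-- Telescoping kernel. -/
noncomputable def tTerm (a c : ℝ) (m j : ℕ) : ℝ :=
  (poch (-((m : ℝ) + 2)) j * poch ((m : ℝ) + 2 * a - 1) j * poch c j) /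
    (poch a j * poch (2 * c) j * (Nat.factorial j))

theorem wTerm_eq (a c : ℝ) (m j : ℕ) :
    wTerm a c m j = tTerm a c m j * ((j - m - 2) * (j - m - 1) / ((m + 2) * (m + 1))) := by
  have h := poch_shift2 (-((m : ℝ) + 2)) j
  have e : -((m : ℝ) + 2) + 2 = -(m : ℝ) := by ring
  rw [e] at h
  have h' : poch (-(m : ℝ)) j
      = poch (-((m : ℝ) + 2)) j * ((j - m - 2) * (j - m - 1) / ((m + 2) * (m + 1))) := by
    have h1 : ((m : ℝ) + 2) ≠ 0 := by positivity
    have h2 : ((m : ℝ) + 1) ≠ 0 := by positivity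
    field_simp
    linear_combination h
  unfold wTerm tTerm
  rw [h']
  ring

theorem wTerm_eq2 (a c : ℝ) (ha : 1 / 2 < a) (m j : ℕ) :
    wTerm a c (m + 2) j = tTerm a c m j *
      ((j + m + 2 * a - 1) * (j + m + 2 * a) / ((m + 2 * a - 1) * (m + 2 * a))) := by
  have h := poch_shift2 ((m : ℝ) + 2 * a - 1) j
  have hm : (0 : ℝ) ≤ m := Nat.cast_nonneg m
  have h1 : ((m : ℝ) + 2 * a - 1) ≠ 0 := by linarith
  have h2 : ((m : ℝ) + 2 * a) ≠ 0 := by linarith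
  have h' : poch (((m + 2 : ℕ) : ℝ) + 2 * a - 1) j = poch ((m : ℝ) + 2 * a - 1) j *
      ((j + m + 2 * a - 1) * (j + m + 2 * a) / ((m + 2 * a - 1) * (m + 2 * a))) := by
    have e : ((m + 2 : ℕ) : ℝ) + 2 * a - 1 = (m : ℝ) + 2 * a - 1 + 2 := by push_cast; ring
    rw [e]
    rw [← mul_div_assoc, eq_div_iff (mul_ne_zero h1 h2)]
    linear_combination h
  have e2 : -((m + 2 : ℕ) : ℝ) = -((m : ℝ) + 2) := by push_cast; ring
  unfold wTerm tTerm
  rw [h', e2]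
  ring

theorem tTerm_succ (a c : ℝ) (ha : 1 / 2 < a) (hc : 0 < c) (m j : ℕ) :
    tTerm a c m (j + 1) * ((a + j) * (2 * c + j) * (j + 1)) =
      tTerm a c m j * ((j - m - 2) * (j + m + 2 * a - 1) * (j + c)) := by
  have h1 := (poch_pos a (by linarith) j).ne'
  have h2 := (poch_pos (2 * c) (by linarith) j).ne'
  have h3 : ((Nat.factorial j : ℕ) : ℝ) ≠ 0 := by positivity
  have h4 : a + j ≠ 0 := by positivity
  have h5 : 2 * c + j ≠ 0 := by positivity
  have h6 : (j : ℝ) + 1 ≠ 0 := by positivity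
  unfold tTerm
  simp only [poch_succ, Nat.factorial_succ]
  push_cast
  field_simp
  ring

theorem partial_sum (a c : ℝ) (ha : 1 / 2 < a) (hc : 0 < c) (m N : ℕ) :
    ∑ j ∈ Finset.range N, ((m + 2 * a) * (m + 1 + 2 * c) * wTerm a c (m + 2) j
      - (m + 1) * (m + 2 * a - 2 * c) * wTerm a c m j) =
    -2 * (2 * m + 2 * a + 1) / ((m + 2 * a - 1) * (m + 2)) *
      (tTerm a c m N * (N * (N + a - 1) * (N + 2 * c - 1))) := by
  have hm : (0 : ℝ) ≤ m := Nat.cast_nonneg m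
  have h1 : ((m : ℝ) + 2 * a - 1) ≠ 0 := by linarith
  have h2 : ((m : ℝ) + 2 * a) ≠ 0 := by linarith
  have h3 : ((m : ℝ) + 2) ≠ 0 := by positivity
  have h4 : ((m : ℝ) + 1) ≠ 0 := by positivity
  induction N with
  | zero => simp
  | succ N ih =>
    rw [Finset.sum_range_succ, ih, wTerm_eq a c m N, wTerm_eq2 a c ha]
    have h := tTerm_succ a c ha hc m N
    have h' : tTerm a c m (N + 1) * (((N + 1 : ℕ) : ℝ) * (((N + 1 : ℕ) : ℝ) + a - 1) *
        (((N + 1 : ℕ) : ℝ) + 2 * c - 1)) =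
        tTerm a c m N * ((N - m - 2) * (N + m + 2 * a - 1) * (N + c)) := by
      rw [← h]; push_cast; ring
    rw [h']
    generalize tTerm a c m N = t
    generalize (m : ℝ) = x at *
    generalize (N : ℝ) = y at *
    obtain ⟨e, he⟩ : ∃ e, e = x + 2 * a - 1 := ⟨_, rfl⟩
    have hx : x = e + 1 - 2 * a := by linarith
    rw [← he] at h1 ⊢
    field_simp
    rw [he]
    ring

theorem wSum_rec (a c : ℝ) (ha : 1 / 2 < a) (hc : 0 < c) (m : ℕ) :
    (m + 2 * a) * (m + 1 + 2 * c) * wSum a c (m + 2) =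
      (m + 1) * (m + 2 * a - 2 * c) * wSum a c m := by
  have h := partial_sum a c ha hc m (m + 3)
  have ht : tTerm a c m (m + 3) = 0 := by
    have := poch_neg_zero (m + 2) (m + 3) (by omega)
    push_cast at this
    unfold tTerm
    rw [this]; simp
  rw [ht, Finset.sum_sub_distrib, ← Finset.mul_sum, ← Finset.mul_sum] at h
  have e : ∑ j ∈ Finset.range (m + 3), wTerm a c m j = wSum a c m := by
    rw [Finset.sum_range_succ, Finset.sum_range_succ, wTerm_zero _ _ _ (m + 1) (by omega),
      wTerm_zero _ _ _ (m + 2) (by omega)]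
    simp [wSum]
  rw [e] at h
  have e2 : ∑ j ∈ Finset.range (m + 3), wTerm a c (m + 2) j = wSum a c (m + 2) := rfl
  rw [e2] at h
  linarith

theorem wSum_zero (a c : ℝ) : wSum a c 0 = 1 := by
  simp [wSum, wTerm, poch]

theorem wSum_one (a c : ℝ) (ha : 1 / 2 < a) (hc : 0 < c) : wSum a c 1 = 0 := by
  have : a ≠ 0 := by linarith
  simp [wSum, wTerm, poch, Finset.sum_range_succ]
  field_simp
  ring

theorem wSum_odd (a c : ℝ) (ha : 1 / 2 < a) (hc : 0 < c) (p : ℕ) : wSum a c (2 * p + 1) = 0 := by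
  induction p with
  | zero => exact wSum_one a c ha hc
  | succ p ih =>
    have h := wSum_rec a c ha hc (2 * p + 1)
    rw [ih, mul_zero] at h
    have h0 : (((2 * p + 1 : ℕ) : ℝ) + 2 * a) * (((2 * p + 1 : ℕ) : ℝ) + 1 + 2 * c) ≠ 0 := by
      have : 0 < a := by linarith
      positivity
    exact (mul_eq_zero.mp h).resolve_left h0

theorem wSum_even_pos (a c : ℝ) (ha : 1 / 2 < a) (hc : 0 < c) (hac : c < a) (p : ℕ) :
    0 < wSum a c (2 * p) := by
  induction p with
  | zero => simp [wSum_zero]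
  | succ p ih =>
    have h := wSum_rec a c ha hc (2 * p)
    have ha' : 0 < a := by linarith
    have h0 : 0 < (((2 * p : ℕ) : ℝ) + 2 * a) * (((2 * p : ℕ) : ℝ) + 1 + 2 * c) := by
      positivity
    have h1 : 0 < ((2 * p : ℕ) : ℝ) + 2 * a - 2 * c := by
      have : (0 : ℝ) ≤ ((2 * p : ℕ) : ℝ) := Nat.cast_nonneg _
      linarith
    have h2 : 0 < (((2 * p : ℕ) : ℝ) + 1) * (((2 * p : ℕ) : ℝ) + 2 * a - 2 * c) *
        wSum a c (2 * p) := by positivity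
    rw [← h] at h2
    exact (mul_pos_iff_of_pos_left h0).mp h2

theorem wSum_even_zero (a : ℝ) (ha : 1 / 2 < a) (p : ℕ) :
    wSum a a (2 * (p + 1)) = 0 := by
  have ha' : 0 < a := by linarith
  induction p with
  | zero =>
    have h := wSum_rec a a ha ha' 0
    simp at h
    rcases h with (h | h) | h
    · linarith
    · linarith
    · exact h
  | succ p ih =>
    have h := wSum_rec a a ha ha' (2 * (p + 1))
    rw [ih, mul_zero] at h
    have h0 : (((2 * (p + 1) : ℕ) : ℝ) + 2 * a) * (((2 * (p + 1) : ℕ) : ℝ) + 1 + 2 * a) ≠ 0 := by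
      positivity
    exact (mul_eq_zero.mp h).resolve_left h0

theorem dCoeff_eq (α : ℝ) (n k : ℕ) (hk : k ≤ n) :
    dCoeff α α n k = (poch ((n : ℝ) + α + α + 1) k * poch ((k : ℝ) + α + 1) (n - k)) /
      ((Nat.factorial (n - k)) * 2 ^ (2 * k) * (Nat.factorial k)) *
      wSum ((k : ℝ) + α + 1) ((k : ℝ) + 1 / 2) (n - k) := by
  unfold dCoeff wSum wTerm
  have e1 : -((n - k : ℕ) : ℝ) = (k : ℝ) - n := by rw [Nat.cast_sub hk]; ring
  have e2 : ((n - k : ℕ) : ℝ) + 2 * ((k : ℝ) + α + 1) - 1 = (n : ℝ) + k + α + α + 1 := by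
    rw [Nat.cast_sub hk]; ring
  have e3 : 2 * ((k : ℝ) + 1 / 2) = 2 * (k : ℝ) + 1 := by ring
  rw [e1, e2, e3]

theorem prefactor_pos (α : ℝ) (hα : -1 / 2 ≤ α) (n k : ℕ) (hn : 1 ≤ n) :
    0 < (poch ((n : ℝ) + α + α + 1) k * poch ((k : ℝ) + α + 1) (n - k)) /
      ((Nat.factorial (n - k)) * 2 ^ (2 * k) * (Nat.factorial k)) := by
  have hn' : (1 : ℝ) ≤ n := by exact_mod_cast hn
  have hk' : (0 : ℝ) ≤ k := Nat.cast_nonneg k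
  have h1 := poch_pos ((n : ℝ) + α + α + 1) (by linarith) k
  have h2 := poch_pos ((k : ℝ) + α + 1) (by linarith) (n - k)
  positivity

/-- signs of `d_{k,n}` in the ultraspherical case `α = β`. If `α > -1/2`, then
`d_{k,n} > 0` when `n - k` is even and `d_{k,n} = 0` when `n - k` is odd; if `α = -1/2`, then
`d_{n,n} > 0` and `d_{k,n} = 0` for `1 ≤ k ≤ n - 1`. -/
theorem dCoeff_gegenbauer_sign (n : ℕ) (hn : 1 ≤ n) (α : ℝ) :
    (-1/2 < α → ∀ k : ℕ, k ≤ n →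
      ((n - k) % 2 = 0 → 0 < dCoeff α α n k) ∧ ((n - k) % 2 = 1 → dCoeff α α n k = 0)) ∧
    (α = -1/2 →
      0 < dCoeff α α n n ∧ ∀ k : ℕ, 1 ≤ k → k ≤ n - 1 → dCoeff α α n k = 0) := by
  constructor
  · intro hα k hk
    have hk' : (0 : ℝ) ≤ k := Nat.cast_nonneg k
    rw [dCoeff_eq α n k hk]
    constructor
    · intro hp
      refine mul_pos (prefactor_pos α hα.le n k hn) ?_
      obtain ⟨p, hp'⟩ : ∃ p, n - k = 2 * p := ⟨(n - k) / 2, by omega⟩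
      rw [hp']
      exact wSum_even_pos _ _ (by linarith) (by linarith) (by linarith) p
    · intro hp
      obtain ⟨p, hp'⟩ : ∃ p, n - k = 2 * p + 1 := ⟨(n - k) / 2, by omega⟩
      have h := wSum_odd ((k : ℝ) + α + 1) ((k : ℝ) + 1 / 2) (by linarith) (by linarith) p
      rw [← hp'] at h
      rw [h, mul_zero]
  · intro hα
    constructor
    · rw [dCoeff_eq α n n le_rfl]
      refine mul_pos (prefactor_pos α hα.ge n n hn) ?_
      rw [Nat.sub_self, wSum_zero]
      exact one_pos
    · intro k hk1 hk2
      have hk' : (1 : ℝ) ≤ k := by exact_mod_cast hk1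
      rw [dCoeff_eq α n k (by omega)]
      have e : (k : ℝ) + 1 / 2 = (k : ℝ) + α + 1 := by rw [hα]; ring
      have hs : wSum ((k : ℝ) + α + 1) ((k : ℝ) + 1 / 2) (n - k) = 0 := by
        rw [e]
        rcases Nat.even_or_odd' (n - k) with ⟨p, hp | hp⟩
        · obtain ⟨q, rfl⟩ : ∃ q, p = q + 1 := ⟨p - 1, by omega⟩
          rw [hp]
          exact wSum_even_zero _ (by linarith) q
        · rw [hp]
          exact wSum_odd _ _ (by linarith) (by linarith) p
      rw [hs, mul_zero]
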